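/- Let f : X → Y be a continuous map between locally finite topological spaces, let α : π₀(X) → ℚ be a function with finite support, and let y ∈ Y. Then the sum ∑_{z ∈ π₀(F_y(f))} α([i(z̃)])·μ(F_y(f), z̃) (over the path components z of the homotopy fiber F_y(f), with z̃ any representative point of z) has only finitely many nonzero terms, its value is independent of the choice of representatives, and it equals ∑_{c ∈ π₀(X), π₀(f)(c) = [y]} α(c)·μ(X, x_c)·μ(Y, y)^{-1}, where x_c is any representative point of the component c. -/

import Mathlib

open scoped unitInterval

/-- The homotopy fiber of `f : X → Y` at `y : Y`: pairs `(x, p)` with `p` a path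
from `f x` to `y`, topologized as a subspace of `X × C(I, Y)`. -/
abbrev HomotopyFiber {X Y : Type*} [TopologicalSpace X] [TopologicalSpace Y]
    (f : X → Y) (y : Y) : Type _ :=
  {p : X × C(I, Y) // p.2 0 = f p.1 ∧ p.2 1 = y}

/-- The projection `i : F_y(f) → X`, `(x, p) ↦ x`. -/
def fiberIncl {X Y : Type*} [TopologicalSpace X] [TopologicalSpace Y]
    (f : X → Y) (y : Y) : HomotopyFiber f y → X :=
  fun p => p.1.1

/-- A space is locally finite if all its homotopy groups `π_n`, `n ≥ 1`, at all base
points are finite, and at each base point all but finitely many of them are trivial. -/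
def IsLocallyFinite (X : Type*) [TopologicalSpace X] : Prop :=
  ∀ x : X, (∀ n : ℕ, 1 ≤ n → Finite (HomotopyGroup (Fin n) X x)) ∧
    ∃ N : ℕ, ∀ n : ℕ, N < n → Subsingleton (HomotopyGroup (Fin n) X x)

/-- `μ(X, x) = ∏_{n ≥ 1} |π_n(X, x)|^{(-1)^n}`. -/
noncomputable def mu (X : Type*) [TopologicalSpace X] (x : X) : ℚ :=
  ∏ᶠ n : ℕ, (Nat.card (HomotopyGroup (Fin (n + 1)) X x) : ℚ) ^ ((-1 : ℤ) ^ (n + 1))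

/-- The path component of a point, as an element of `π₀(X)`. -/
def toPi0 {X : Type*} [TopologicalSpace X] (x : X) : ZerothHomotopy X :=
  Quotient.mk (pathSetoid X) x

/-- The map `π₀(f) : π₀(X) → π₀(Y)` induced by a continuous map. -/
def pi0Map {X Y : Type*} [TopologicalSpace X] [TopologicalSpace Y] {f : X → Y}
    (hf : Continuous f) : ZerothHomotopy X → ZerothHomotopy Y :=
  Quot.map f (fun _ _ h => ⟨h.somePath.map hf⟩)

/-!
Passing to loop spaces shifts homotopy groups, so `μ(A, a) = (|π₁(A, a)| · μ(Ω_a A))⁻¹`, and the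
loop space of the homotopy fibre `F` of `g : A → B` over `g a` is the homotopy fibre of
`Ωg : Ω_a A → Ω_{g a} B`. The components of `F` over the component of `a` are the cosets of
`im π₁(g)` in `π₁(B, g a)`, and `|π₁(F)| = |ker π₁(g)| · [π₂(B) : im π₂(g)]`, where the second
factor is the number of components of the homotopy fibre of `Ωg` over that of the constant loop.
By induction on the highest degree of a nontrivial homotopy group,

  `μ(F) · [π₁(B) : im π₁(g)] = μ(A, a) / μ(B, g a)`.

Hence the components of the homotopy fibre over a component `c` of the domain contribute equal
terms, which add up to `α(c) · μ(X, c) / μ(Y, y)`.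

Homotopy groups enter only through their cardinalities, so `π_n` is handled as `π₀` of the space
of generalized loops, and base points are changed by attaching a collar to the cube.
-/

open scoped Topology Topology.Homotopy ContinuousMap

section PathComponents

variable {X Y : Type*} [TopologicalSpace X] [TopologicalSpace Y]

lemma toPi0_eq_toPi0_iff {x x' : X} : toPi0 x = toPi0 x' ↔ Joined x x' :=
  Quotient.eq

lemma toPi0_surjective : Function.Surjective (toPi0 : X → ZerothHomotopy X) :=
  Quot.mk_surjective

lemma pi0Map_toPi0 {f : X → Y} (hf : Continuous f) (x : X) : pi0Map hf (toPi0 x) = toPi0 (f x) :=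
  rfl

lemma pi0Map_comp {Z : Type*} [TopologicalSpace Z] {f : X → Y} {g : Y → Z} (hg : Continuous g)
    (hf : Continuous f) : pi0Map hg ∘ pi0Map hf = pi0Map (hg.comp hf) := by
  ext ⟨x⟩
  rfl

lemma joined_of_continuous {F : I → X} (hF : Continuous F) : Joined (F 0) (F 1) :=
  ⟨⟨⟨F, hF⟩, rfl, rfl⟩⟩

end PathComponents

section HomotopyGroups

variable {N X Y Z : Type*} [TopologicalSpace X] [TopologicalSpace Y] [TopologicalSpace Z]

lemma continuous_genLoop_of_uncurry {x : X} {φ : Z → Ω^ N X x}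
    (hφ : Continuous fun p : Z × (I^N) ↦ φ p.1 p.2) : Continuous φ :=
  Continuous.subtype_mk (f := fun z ↦ (φ z : C(I^N, X)))
    (ContinuousMap.continuous_of_continuous_uncurry _ hφ) _

lemma genLoop_homotopic_iff_joined {x : X} {g g' : Ω^ N X x} :
    GenLoop.Homotopic g g' ↔ Joined g g' := by
  constructor
  · rintro ⟨H⟩
    let F : I → Ω^ N X x := fun s ↦
      ⟨⟨fun t ↦ H (s, t), by fun_prop⟩, fun t ht ↦ (H.eq_fst s ht).trans (g.2 t ht)⟩
    have hF : Continuous F := continuous_genLoop_of_uncurry H.continuous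
    convert joined_of_continuous hF using 1
    · ext t; exact (H.apply_zero t).symm
    · ext t; exact (H.apply_one t).symm
  · rintro ⟨P⟩
    exact ⟨{ toFun := fun p ↦ P p.1 p.2
             continuous_toFun := by fun_prop
             map_zero_left := fun t ↦ by rw [P.source]; rfl
             map_one_left := fun t ↦ by rw [P.target]; rfl
             prop' := fun s t ht ↦ ((P s).2 t ht).trans (g.2 t ht).symm }⟩

/-- `π_n(X, x)` as the set of path components of the space of generalized loops. -/
def homotopyGroupEquivPi0GenLoop (N : Type*) (x : X) :
    HomotopyGroup N X x ≃ ZerothHomotopy (Ω^ N X x) :=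
  Quotient.congr (Equiv.refl _) fun _ _ ↦ genLoop_homotopic_iff_joined

/-- Post-composition of generalized loops with a continuous map. -/
def genLoopMap (N : Type*) (φ : C(X, Y)) (x : X) : C(Ω^ N X x, Ω^ N Y (φ x)) where
  toFun g := ⟨φ.comp g, fun t ht ↦ congrArg φ (g.2 t ht)⟩
  continuous_toFun := continuous_genLoop_of_uncurry (by
    change Continuous fun p : Ω^ N X x × (I^N) ↦ φ (p.1 p.2)
    fun_prop)

end HomotopyGroups

/-- `a` for radii `r ≤ 1`, and the track `h` on the collar beyond. -/
noncomputable def collar {X : Type*} (r : ℝ) (a : X) (h : ℝ → X) : X :=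
  if r ≤ 1 then a else h (r - 1)

section Collar

variable {X Z : Type*}

lemma collar_of_le {r : ℝ} (hr : r ≤ 1) (a : X) (h : ℝ → X) : collar r a h = a :=
  if_pos hr

lemma collar_one_add {s : ℝ} (hs : 0 ≤ s) {a : X} {h : ℝ → X} (ha : s = 0 → a = h 0) :
    collar (1 + s) a h = h s := by
  rcases hs.eq_or_lt with rfl | hs
  · rw [collar_of_le (by simp), ha rfl]
  · rw [collar, if_neg (by linarith), add_sub_cancel_left]

lemma continuous_collar [TopologicalSpace X] [TopologicalSpace Z] {r : Z → ℝ} {a : Z → X}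
    {h : Z → ℝ → X} (hr : Continuous r) (ha : Continuous a)
    (hh : Continuous fun p : Z × ℝ ↦ h p.1 p.2) (hah : ∀ z, r z = 1 → a z = h z 0) :
    Continuous fun z ↦ collar (r z) (a z) (h z) := by
  refine Continuous.if_le ha (hh.comp (by fun_prop : Continuous fun z ↦ (z, r z - 1))) hr
    continuous_const fun z hz ↦ ?_
  rw [hah z hz, hz, sub_self]

end Collar

section CubeCollar

variable {N X Z : Type*}

/-- The centred cube coordinates of `t`, dilated by `1 + s`. -/
def dilate (s : ℝ) (t : I^N) : N → ℝ :=
  fun i ↦ (1 + s) * (2 * (t i : ℝ) - 1)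

/-- The point of the cube nearest to the point with centred coordinates `u`. -/
noncomputable def clampCube (u : N → ℝ) : I^N :=
  fun i ↦ Set.projIcc 0 1 zero_le_one ((u i + 1) / 2)

lemma clampCube_dilate_zero (t : I^N) : clampCube (dilate 0 t) = t := by
  ext i
  simp [clampCube, dilate, Set.projIcc_val]

variable [Fintype N]

lemma norm_dilate_le {s : ℝ} (hs : 0 ≤ s) (t : I^N) : ‖dilate s t‖ ≤ 1 + s := by
  rw [pi_norm_le_iff_of_nonneg (by linarith)]
  intro i
  have hcentred : |2 * (t i : ℝ) - 1| ≤ 1 := by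
    rw [abs_le]; constructor <;> linarith [(t i).2.1, (t i).2.2]
  rw [dilate, Real.norm_eq_abs, abs_mul, abs_of_nonneg (by linarith : (0 : ℝ) ≤ 1 + s)]
  exact mul_le_of_le_one_right (by linarith) hcentred

lemma norm_dilate_of_mem_boundary {s : ℝ} (hs : 0 ≤ s) {t : I^N} (ht : t ∈ Cube.boundary N) :
    ‖dilate s t‖ = 1 + s := by
  refine le_antisymm (norm_dilate_le hs t) ?_
  obtain ⟨i, hi⟩ := ht
  have hface : ‖dilate s t i‖ = 1 + s := by
    rw [dilate, Real.norm_eq_abs, abs_mul, abs_of_nonneg (by linarith : (0 : ℝ) ≤ 1 + s)]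
    rcases hi with hi | hi <;> rw [hi] <;> norm_num
  exact hface ▸ norm_le_pi_norm (dilate s t) i

lemma clampCube_mem_boundary {u : N → ℝ} (hu : ‖u‖ = 1) : clampCube u ∈ Cube.boundary N := by
  by_contra hinterior
  refine hu.not_lt ((pi_norm_lt_iff one_pos).2 fun i ↦ ?_)
  by_contra! hi
  rw [Real.norm_eq_abs, le_abs] at hi
  refine hinterior ⟨i, hi.symm.imp (fun h ↦ ?_) fun h ↦ ?_⟩
  · exact Set.projIcc_of_le_left _ (by linarith)
  · exact Set.projIcc_of_right_le _ (by linarith)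

/-- The cube `g`, shrunk by the factor `1 + s`, with the track `h` read off radially on the
collar around it. -/
noncomputable def cubeCollar (s : ℝ) (g : (I^N) → X) (h : ℝ → X) (t : I^N) : X :=
  collar ‖dilate s t‖ (g (clampCube (dilate s t))) h

lemma cubeCollar_zero (g : (I^N) → X) (h : ℝ → X) (t : I^N) : cubeCollar 0 g h t = g t := by
  rw [cubeCollar, collar_of_le (by simpa using norm_dilate_le le_rfl t), clampCube_dilate_zero]

lemma cubeCollar_of_mem_boundary {s : ℝ} (hs : 0 ≤ s) {g : (I^N) → X} {h : ℝ → X}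
    (hgh : ∀ t ∈ Cube.boundary N, g t = h 0) {t : I^N} (ht : t ∈ Cube.boundary N) :
    cubeCollar s g h t = h s := by
  rw [cubeCollar, norm_dilate_of_mem_boundary hs ht, collar_one_add hs]
  rintro rfl
  rw [clampCube_dilate_zero, hgh t ht]

lemma continuous_cubeCollar [TopologicalSpace X] [TopologicalSpace Z] {s : Z → ℝ}
    {g : Z → (I^N) → X} {h : Z → ℝ → X} (hs : Continuous s)
    (hg : Continuous fun p : Z × (I^N) ↦ g p.1 p.2) (hh : Continuous fun p : Z × ℝ ↦ h p.1 p.2)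
    (hgh : ∀ z, ∀ t ∈ Cube.boundary N, g z t = h z 0) :
    Continuous fun p : Z × (I^N) ↦ cubeCollar (s p.1) (g p.1) (h p.1) p.2 := by
  have hdilate : Continuous fun p : Z × (I^N) ↦ dilate (s p.1) p.2 := by
    unfold dilate; fun_prop
  have hclamp : Continuous (clampCube : (N → ℝ) → I^N) :=
    continuous_pi fun i ↦ continuous_projIcc.comp (by fun_prop)
  refine continuous_collar hdilate.norm
    (hg.comp (by fun_prop : Continuous fun p : Z × (I^N) ↦ (p.1, clampCube (dilate (s p.1) p.2))))
    (hh.comp (by fun_prop : Continuous fun p : (Z × (I^N)) × ℝ ↦ (p.1.1, p.2))) fun p hp ↦ ?_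
  exact hgh _ _ (clampCube_mem_boundary hp)

end CubeCollar

section Transport

variable {N X Y : Type*} [Fintype N] [TopologicalSpace X] [TopologicalSpace Y] {x x' : X}

/-- The cubes `g` and `g'` are homotopic through cubes that are constant on the boundary, with
value running along `γ`. -/
def FreelyHomotopicAlong {N : Type*} (γ : Path x x') (g : Ω^ N X x) (g' : Ω^ N X x') : Prop :=
  ∃ K : C(I × (I^N), X), (∀ t, K (0, t) = g t) ∧ (∀ t, K (1, t) = g' t) ∧
    ∀ s, ∀ t ∈ Cube.boundary N, K (s, t) = γ s

lemma FreelyHomotopicAlong.symm {N : Type*} {γ : Path x x'} {g : Ω^ N X x} {g' : Ω^ N X x'}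
    (h : FreelyHomotopicAlong γ g g') : FreelyHomotopicAlong γ.symm g' g := by
  obtain ⟨K, hK0, hK1, hK⟩ := h
  refine ⟨⟨fun p ↦ K (unitInterval.symm p.1, p.2), by fun_prop⟩, fun t ↦ ?_, fun t ↦ ?_,
    fun s t ht ↦ hK _ t ht⟩
  · simpa using hK1 t
  · simpa using hK0 t

lemma freelyHomotopicAlong_evalAt {N : Type*} {φ ψ : C(X, Y)} (H : φ.Homotopy ψ)
    (g : Ω^ N X x) :
    FreelyHomotopicAlong (H.evalAt x) (genLoopMap N φ x g) (genLoopMap N ψ x g) :=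
  ⟨⟨fun p ↦ H (p.1, g p.2), by fun_prop⟩, fun _ ↦ H.apply_zero _, fun _ ↦ H.apply_one _,
    fun s t ht ↦ congrArg (fun a ↦ H (s, a)) (g.2 t ht)⟩

lemma genLoop_eq_extend_zero {N : Type*} (γ : Path x x') (g : Ω^ N X x) :
    ∀ t ∈ Cube.boundary N, g t = γ.extend 0 := fun t ht ↦ by
  rw [γ.extend_zero]; exact g.2 t ht

lemma continuous_cubeCollar_extend (γ : Path x x') :
    Continuous fun p : Ω^ N X x × (I^N) ↦ cubeCollar 1 p.1 γ.extend p.2 :=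
  continuous_cubeCollar (s := fun _ ↦ 1) (g := fun (g : Ω^ N X x) t ↦ g t)
    (h := fun _ ↦ γ.extend) (by fun_prop) (by fun_prop) (by fun_prop) (genLoop_eq_extend_zero γ)

/-- Change of base point along `γ`. -/
noncomputable def transport (N : Type*) [Fintype N] (γ : Path x x') :
    C(Ω^ N X x, Ω^ N X x') where
  toFun g := ⟨⟨cubeCollar 1 g γ.extend, Continuous.uncurry_left
      (f := fun g : Ω^ N X x ↦ cubeCollar 1 g γ.extend) g (continuous_cubeCollar_extend γ)⟩,
    fun t ht ↦ by
      change cubeCollar 1 g γ.extend t = x'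
      rw [cubeCollar_of_mem_boundary zero_le_one (genLoop_eq_extend_zero γ g) ht, γ.extend_one]⟩
  continuous_toFun := continuous_genLoop_of_uncurry (continuous_cubeCollar_extend γ)

lemma freelyHomotopicAlong_transport (γ : Path x x') (g : Ω^ N X x) :
    FreelyHomotopicAlong γ g (transport N γ g) := by
  have hcont : Continuous fun p : I × (I^N) ↦ cubeCollar p.1 g γ.extend p.2 :=
    continuous_cubeCollar (s := fun s : I ↦ (s : ℝ)) (g := fun _ t ↦ g t)
      (h := fun _ ↦ γ.extend) (by fun_prop) (by fun_prop) (by fun_prop)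
      fun _ ↦ genLoop_eq_extend_zero γ g
  refine ⟨⟨_, hcont⟩, cubeCollar_zero _ _, fun t ↦ rfl, fun s t ht ↦ ?_⟩
  exact (cubeCollar_of_mem_boundary s.2.1 (genLoop_eq_extend_zero γ g) ht).trans
    (γ.extend_apply s.2)

/-- While the free homotopy runs from `z` to `1`, the collar keeps only the part of `γ` that is
still to be covered. -/
lemma FreelyHomotopicAlong.joined_transport {γ : Path x x'} {g : Ω^ N X x} {g' : Ω^ N X x'}
    (h : FreelyHomotopicAlong γ g g') : Joined (transport N γ g) g' := by
  obtain ⟨K, hK0, hK1, hK⟩ := h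
  have hboundary : ∀ z : I, ∀ t ∈ Cube.boundary N, K (z, t) = γ.extend (z + 0) := fun z t ht ↦ by
    rw [add_zero, γ.extend_apply z.2]; exact hK z t ht
  have hcont : Continuous fun p : I × (I^N) ↦
      cubeCollar (1 - p.1) (fun t ↦ K (p.1, t)) (fun u ↦ γ.extend (p.1 + u)) p.2 :=
    continuous_cubeCollar (s := fun z : I ↦ (1 - z : ℝ)) (g := fun z t ↦ K (z, t))
      (h := fun z u ↦ γ.extend (z + u)) (by fun_prop) (by fun_prop) (by fun_prop) hboundary
  let F : I → Ω^ N X x' := fun z ↦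
    ⟨⟨cubeCollar (1 - z) (fun t ↦ K (z, t)) fun u ↦ γ.extend (z + u), Continuous.uncurry_left
      (f := fun z : I ↦ cubeCollar (1 - z) (fun t ↦ K (z, t)) fun u ↦ γ.extend (z + u)) z hcont⟩,
    fun t ht ↦ by
      change cubeCollar (1 - z : ℝ) (fun t ↦ K (z, t)) (fun u ↦ γ.extend (z + u)) t = x'
      rw [cubeCollar_of_mem_boundary (sub_nonneg.2 z.2.2) (hboundary z) ht, add_sub_cancel,
        γ.extend_one]⟩
  convert joined_of_continuous (F := F) (continuous_genLoop_of_uncurry hcont) using 1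
  · ext t
    change cubeCollar 1 g γ.extend t = cubeCollar (1 - ((0 : I) : ℝ)) (fun t ↦ K (0, t))
      (fun u ↦ γ.extend (((0 : I) : ℝ) + u)) t
    simp only [hK0, Set.Icc.coe_zero, sub_zero, zero_add]
  · ext t
    change g' t = cubeCollar (1 - ((1 : I) : ℝ)) (fun t ↦ K (1, t))
      (fun u ↦ γ.extend (((1 : I) : ℝ) + u)) t
    rw [Set.Icc.coe_one, sub_self, cubeCollar_zero, hK1]

end Transport

section HomotopyInvariance

variable {N X Y : Type*} [TopologicalSpace X] [TopologicalSpace Y]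

lemma bijective_pi0Map_of_joined (φ : C(X, Y)) (ψ : C(Y, X)) (hψφ : ∀ x, Joined (ψ (φ x)) x)
    (hφψ : ∀ y, Joined (φ (ψ y)) y) : Function.Bijective (pi0Map φ.continuous) := by
  refine Function.bijective_iff_has_inverse.2 ⟨pi0Map ψ.continuous, ?_, ?_⟩
  · rintro ⟨x⟩
    exact toPi0_eq_toPi0_iff.2 (hψφ x)
  · rintro ⟨y⟩
    exact toPi0_eq_toPi0_iff.2 (hφψ y)

lemma bijective_pi0Map_of_homotopyEquiv (e : X ≃ₕ Y) :
    Function.Bijective (pi0Map e.toFun.continuous) :=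
  bijective_pi0Map_of_joined e.toFun e.invFun
    (fun x ↦ e.left_inv.elim fun H ↦ ⟨H.evalAt x⟩) fun y ↦ e.right_inv.elim fun H ↦ ⟨H.evalAt y⟩

lemma bijective_pi0Map_transport [Fintype N] {x x' : X} (γ : Path x x') :
    Function.Bijective (pi0Map (transport N γ).continuous) :=
  bijective_pi0Map_of_joined _ (transport N γ.symm)
    (fun g ↦ (freelyHomotopicAlong_transport γ g).symm.joined_transport) fun g ↦ by
      simpa using (freelyHomotopicAlong_transport γ.symm g).symm.joined_transport

lemma card_homotopyGroup_eq_of_joined [Finite N] {x x' : X} (h : Joined x x') :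
    Nat.card (HomotopyGroup N X x) = Nat.card (HomotopyGroup N X x') := by
  cases nonempty_fintype N
  rw [Nat.card_congr (homotopyGroupEquivPi0GenLoop N x),
    Nat.card_congr (homotopyGroupEquivPi0GenLoop N x'),
    Nat.card_eq_of_bijective _ (bijective_pi0Map_transport h.somePath)]

lemma bijective_pi0Map_genLoopMap_of_homotopic_id [Finite N] {φ : C(X, X)}
    (h : φ.Homotopic (.id X)) (x : X) :
    Function.Bijective (pi0Map (genLoopMap N φ x).continuous) := by
  cases nonempty_fintype N
  obtain ⟨H⟩ := h.symm
  have htransport : pi0Map (genLoopMap N φ x).continuous =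
      pi0Map (transport N (H.evalAt x)).continuous := by
    ext ⟨g⟩
    exact (toPi0_eq_toPi0_iff.2 (freelyHomotopicAlong_evalAt H g).joined_transport).symm
  exact htransport ▸ bijective_pi0Map_transport (H.evalAt x)

/-- Two-out-of-six for `φ`, `ψ`, `φ`: both composites are homotopic to the identity. -/
lemma bijective_pi0Map_genLoopMap [Finite N] (e : X ≃ₕ Y) (x : X) :
    Function.Bijective (pi0Map (genLoopMap N e.toFun x).continuous) := by
  have hleft : Function.Bijective (pi0Map (genLoopMap N e.invFun (e.toFun x)).continuous ∘
      pi0Map (genLoopMap N e.toFun x).continuous) := by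
    rw [pi0Map_comp]
    exact bijective_pi0Map_genLoopMap_of_homotopic_id e.left_inv x
  have hright : Function.Bijective (
      pi0Map (genLoopMap N e.toFun (e.invFun (e.toFun x))).continuous ∘
      pi0Map (genLoopMap N e.invFun (e.toFun x)).continuous) := by
    rw [pi0Map_comp]
    exact bijective_pi0Map_genLoopMap_of_homotopic_id e.right_inv (e.toFun x)
  have hinv : Function.Bijective (pi0Map (genLoopMap N e.invFun (e.toFun x)).continuous) :=
    ⟨hright.1.of_comp, hleft.2.of_comp⟩
  exact (Function.Bijective.of_comp_iff' hinv _).1 hleft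

lemma card_homotopyGroup_eq_of_homotopyEquiv [Finite N] (e : X ≃ₕ Y) (x : X) :
    Nat.card (HomotopyGroup N X x) = Nat.card (HomotopyGroup N Y (e.toFun x)) := by
  rw [Nat.card_congr (homotopyGroupEquivPi0GenLoop N x),
    Nat.card_congr (homotopyGroupEquivPi0GenLoop N (e.toFun x)),
    Nat.card_eq_of_bijective _ (bijective_pi0Map_genLoopMap e x)]

/-- Generalized loops on the one-dimensional cube are paths. -/
def genLoopHomeomorphPath (N : Type*) [Unique N] (x : X) : Ω^ N X x ≃ₜ Path x x where
  toEquiv := genLoopEquivOfUnique N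
  continuous_toFun := by
    rw [← Path.continuous_uncurry_iff]
    change Continuous fun p : Ω^ N X x × I ↦ p.1 fun _ ↦ p.2
    fun_prop
  continuous_invFun := continuous_genLoop_of_uncurry (by
    change Continuous fun p : Path x x × (I^N) ↦ p.1 (p.2 default)
    fun_prop)

lemma card_homotopyGroup_succ (n : ℕ) (x : X) : Nat.card (HomotopyGroup (Fin (n + 1)) X x) =
    Nat.card (HomotopyGroup (Fin n) (Path x x) (Path.refl x)) := by
  have hpath : genLoopHomeomorphPath (Fin 1) x GenLoop.const = Path.refl x := rfl
  rw [← hpath]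
  change _ = Nat.card (HomotopyGroup (Fin n) (Path x x)
    ((genLoopHomeomorphPath (Fin 1) x).toHomotopyEquiv.toFun GenLoop.const))
  rw [← card_homotopyGroup_eq_of_homotopyEquiv,
    Nat.card_congr (homotopyGroupEquivPi0GenLoop _ _),
    Nat.card_congr (homotopyGroupEquivPi0GenLoop _ _)]
  let e : Ω^ (Fin n) (Ω^ (Fin 1) X x) GenLoop.const ≃ₜ Ω^ (Fin (n + 1)) X x :=
    (GenLoop.genLoopGenLoopEquiv (M := Fin n) (N := Fin 1) x).trans
      (GenLoop.congr x finSumFinEquiv)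
  exact (Nat.card_eq_of_bijective _ (bijective_pi0Map_of_homotopyEquiv e.toHomotopyEquiv)).symm

lemma card_homotopyGroup_one (x : X) :
    Nat.card (HomotopyGroup (Fin 1) X x) = Nat.card (FundamentalGroup X x) :=
  Nat.card_congr HomotopyGroup.pi1EquivFundamentalGroup

end HomotopyInvariance

lemma path_homotopic_iff_joined {X : Type*} [TopologicalSpace X] {x x' : X} {p q : Path x x'} :
    p.Homotopic q ↔ Joined p q := by
  constructor
  · rintro ⟨H⟩
    have hH : Continuous H.eval := Path.continuous_uncurry_iff.1 H.continuous
    simpa using joined_of_continuous hH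
  · rintro ⟨P⟩
    exact ⟨{ toFun := fun s ↦ P s.1 s.2
             continuous_toFun := by fun_prop
             map_zero_left := fun t ↦ by rw [P.source]; rfl
             map_one_left := fun t ↦ by rw [P.target]; rfl
             prop' := fun s t ht ↦ by rcases ht with rfl | rfl <;> simp }⟩

namespace HomotopyFiber

variable {A B Z : Type*} [TopologicalSpace A] [TopologicalSpace B] [TopologicalSpace Z]
variable {g : C(A, B)} {b b' : B}

/-- The point of the homotopy fibre given by a path from `g a` to `b`. -/
def ofPath {a : A} (q : Path (g a) b) : HomotopyFiber g b :=
  ⟨(a, q.toContinuousMap), q.source, q.target⟩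

/-- The path component of a point of the homotopy fibre. -/
def path (z : HomotopyFiber g b) : Path (g z.1.1) b :=
  ⟨z.1.2, z.2.1, z.2.2⟩

/-- The projection of the homotopy fibre to the domain, as a bundled continuous map. -/
def incl (g : C(A, B)) (b : B) : C(HomotopyFiber g b, A) where
  toFun := fiberIncl g b
  continuous_toFun := by unfold fiberIncl; fun_prop

lemma continuous_of_uncurry {φ : Z → HomotopyFiber g b} (hbase : Continuous fun z ↦ (φ z).1.1)
    (hpath : Continuous fun p : Z × I ↦ (φ p.1).1.2 p.2) : Continuous φ :=
  Continuous.subtype_mk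
    (hbase.prodMk (ContinuousMap.continuous_of_continuous_uncurry _ hpath)) _

lemma continuous_path_uncurry : Continuous fun p : HomotopyFiber g b × I ↦ p.1.path p.2 := by
  change Continuous fun p : HomotopyFiber g b × I ↦ p.1.1.2 p.2
  fun_prop

lemma continuous_path_extend_uncurry :
    Continuous fun p : HomotopyFiber g b × ℝ ↦ p.1.path.extend p.2 :=
  Path.continuous_uncurry_extend_of_continuous_family (fun z : HomotopyFiber g b ↦ z.path)
    continuous_path_uncurry

lemma joined_ofPath_of_homotopic {a : A} {q q' : Path (g a) b} (h : q.Homotopic q') :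
    Joined (ofPath q) (ofPath q') := by
  obtain ⟨H⟩ := h
  have hF : Continuous fun s ↦ ofPath (H.eval s) :=
    continuous_of_uncurry continuous_const H.continuous
  simpa using joined_of_continuous hF

lemma joined_ofPath_map_trans {a a' : A} (δ : Path a a') (q : Path (g a') b) :
    Joined (ofPath ((δ.map g.continuous).trans q)) (ofPath q) := by
  let tail (s : I) : Path (δ s) a' := (δ.subpath s 1).cast rfl δ.target.symm
  have htail : Continuous fun p : I × I ↦ tail p.1 p.2 :=
    δ.subpath_continuous_family.comp
      (by fun_prop : Continuous fun p : I × I ↦ (p.1, ((1 : I), p.2)))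
  have hF : Continuous fun s ↦ ofPath (((tail s).map g.continuous).trans q) :=
    continuous_of_uncurry δ.continuous <|
      Path.trans_continuous_family (fun s ↦ (tail s).map g.continuous) (g.continuous.comp htail)
        (fun _ ↦ q) (q.continuous.comp continuous_snd)
  have hzero : ofPath (((tail 0).map g.continuous).trans q) =
      ofPath ((δ.map g.continuous).trans q) := by
    refine Subtype.ext (Prod.ext δ.source ?_)
    ext t
    simp [ofPath, tail, Path.trans_apply]
  have hone : ofPath (((tail 1).map g.continuous).trans q) =
      ofPath ((Path.refl (g a')).trans q) := by
    refine Subtype.ext (Prod.ext δ.target ?_)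
    ext t
    simp [ofPath, tail, Path.trans_apply]
  exact hzero ▸ (joined_of_continuous hF).trans
    (hone ▸ joined_ofPath_of_homotopic ⟨Path.Homotopy.reflTrans q⟩)

/-- Going around the square `(s, t) ↦ P s t` of a path `P` in the homotopy fibre in the two
possible ways gives the homotopy. -/
lemma exists_homotopic_of_joined {a a' : A} {q : Path (g a) b} {q' : Path (g a') b}
    (h : Joined (ofPath q) (ofPath q')) :
    ∃ δ : Path a a', q.Homotopic ((δ.map g.continuous).trans q') := by
  obtain ⟨P⟩ := h
  let δ : Path a a' := P.map (incl g b).continuous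
  refine ⟨δ, ?_⟩
  let square : C(I × I, B) := ⟨fun p ↦ (P p.1).1.2 p.2, by fun_prop⟩
  have : ContractibleSpace I := (convex_Icc (0 : ℝ) 1).contractibleSpace ⟨0, by simp⟩
  let upRight : Path ((0, 0) : I × I) (1, 1) :=
    ((Path.refl (0 : I)).prod Path.id).trans (Path.id.prod (Path.refl (1 : I)))
  let rightUp : Path ((0, 0) : I × I) (1, 1) :=
    (Path.id.prod (Path.refl (0 : I))).trans ((Path.refl (1 : I)).prod Path.id)
  have hsource : g a = square (0, 0) := by
    change g a = (P 0).1.2 0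
    rw [P.source]; exact q.source.symm
  have htarget : b = square (1, 1) := (P 1).2.2.symm
  have hupRight : (upRight.map square.continuous).cast hsource htarget =
      q.trans (Path.refl b) := by
    ext t
    simp only [upRight, Path.map_trans, Path.cast_coe, Path.trans_apply]
    split_ifs
    · change (P 0).1.2 _ = _
      rw [P.source]; rfl
    · exact (P _).2.2
  have hrightUp : (rightUp.map square.continuous).cast hsource htarget =
      (δ.map g.continuous).trans q' := by
    ext t
    simp only [rightUp, Path.map_trans, Path.cast_coe, Path.trans_apply]
    split_ifs
    · exact (P _).2.1
    · change (P 1).1.2 _ = _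
      rw [P.target]; rfl
  have haround : (q.trans (Path.refl b)).Homotopic ((δ.map g.continuous).trans q') := by
    rw [← hupRight, ← hrightUp]
    exact ((SimplyConnectedSpace.paths_homotopic upRight rightUp).map square).pathCast _ _
  exact Path.Homotopic.trans ⟨(Path.Homotopy.transRefl q).symm⟩ haround

lemma joined_ofPath_iff {a a' : A} {q : Path (g a) b} {q' : Path (g a') b} :
    Joined (ofPath q) (ofPath q') ↔
      ∃ δ : Path a a', q.Homotopic ((δ.map g.continuous).trans q') :=
  ⟨exists_homotopic_of_joined, fun ⟨δ, hδ⟩ ↦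
    (joined_ofPath_of_homotopic hδ).trans (joined_ofPath_map_trans δ q')⟩

/-- The map of homotopy fibres over `A` which extends paths by `γ`. -/
noncomputable def extendBy (g : C(A, B)) (γ : Path b b') :
    C(HomotopyFiber g b, HomotopyFiber g b') where
  toFun z := ofPath (z.path.trans γ)
  continuous_toFun := continuous_of_uncurry (incl g b).continuous <|
    Path.trans_continuous_family _ continuous_path_uncurry (fun _ ↦ γ)
      (γ.continuous.comp continuous_snd)

lemma extendBy_refl_homotopic_id (g : C(A, B)) (b : B) :
    (extendBy g (Path.refl b)).Homotopic (.id _) := by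
  let F (p : I × HomotopyFiber g b) : HomotopyFiber g b :=
    ⟨(p.2.1.1, ⟨fun t ↦ p.2.path.extend ((1 + p.1) * t), by fun_prop⟩),
      by simp, by
        have : (1 : ℝ) ≤ 1 + p.1 := by linarith [p.1.2.1]
        simp [Path.extend_of_one_le _ this]⟩
  have hF : Continuous F := continuous_of_uncurry ((incl g b).continuous.comp continuous_snd) <|
    continuous_path_extend_uncurry.comp
      (by fun_prop : Continuous fun p : (I × HomotopyFiber g b) × I ↦
        (p.1.2, (1 + p.1.1 : ℝ) * p.2))
  refine .symm ⟨⟨⟨F, hF⟩, fun z ↦ ?_, fun z ↦ ?_⟩⟩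
  · refine Subtype.ext (Prod.ext rfl ?_)
    ext t
    change z.path.extend ((1 + ((0 : I) : ℝ)) * t) = z.path t
    simp
  · refine Subtype.ext (Prod.ext rfl ?_)
    ext t
    change z.path.extend ((1 + ((1 : I) : ℝ)) * t) = z.path.trans (Path.refl b) t
    rw [Set.Icc.coe_one, one_add_one_eq_two, Path.trans_apply]
    split_ifs with ht
    · exact z.path.extend_apply _
    · exact z.path.extend_of_one_le (by linarith)

lemma extendBy_symm_comp_extendBy_homotopic_id (γ : Path b b') :
    ((extendBy g γ.symm).comp (extendBy g γ)).Homotopic (.id _) := by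
  let head (s : I) : Path b (γ s) := (γ.subpath 0 s).cast γ.source.symm rfl
  have hhead : Continuous fun p : I × I ↦ head p.1 p.2 :=
    γ.subpath_continuous_family.comp
      (by fun_prop : Continuous fun p : I × I ↦ ((0 : I), (p.1, p.2)))
  let F (p : I × HomotopyFiber g b) : HomotopyFiber g b :=
    extendBy g (head p.1).symm (extendBy g (head p.1) p.2)
  have hF : Continuous F := by
    refine continuous_of_uncurry ((incl g b).continuous.comp continuous_snd) <|
      Path.trans_continuous_family
        (fun p : I × HomotopyFiber g b ↦ p.2.path.trans (head p.1))
        (Path.trans_continuous_family (fun p : I × HomotopyFiber g b ↦ p.2.path) ?_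
          (fun p ↦ head p.1) ?_) (fun p ↦ (head p.1).symm) ?_
    · exact continuous_path_uncurry.comp
        (by fun_prop : Continuous fun p : (I × HomotopyFiber g b) × I ↦ (p.1.2, p.2))
    · exact hhead.comp
        (by fun_prop : Continuous fun p : (I × HomotopyFiber g b) × I ↦ (p.1.1, p.2))
    · exact hhead.comp
        (by fun_prop : Continuous fun p : (I × HomotopyFiber g b) × I ↦
          (p.1.1, unitInterval.symm p.2))
  have hback : ((extendBy g γ.symm).comp (extendBy g γ)).Homotopic
      ((extendBy g (.refl b)).comp (extendBy g (.refl b))) := by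
    refine .symm ⟨⟨⟨F, hF⟩, fun z ↦ ?_, fun z ↦ ?_⟩⟩
    · refine Subtype.ext (Prod.ext rfl ?_)
      ext t
      simp [F, extendBy, ofPath, path, head, Path.trans_apply]
    · refine Subtype.ext (Prod.ext rfl ?_)
      ext t
      simp [F, extendBy, ofPath, path, head, Path.trans_apply]
  exact hback.trans ((extendBy_refl_homotopic_id g b).comp (extendBy_refl_homotopic_id g b))

/-- Homotopy fibres over points joined by a path are homotopy equivalent. -/
noncomputable def homotopyEquivOfPath (g : C(A, B)) (γ : Path b b') :
    HomotopyFiber g b ≃ₕ HomotopyFiber g b' where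
  toFun := extendBy g γ
  invFun := extendBy g γ.symm
  left_inv := extendBy_symm_comp_extendBy_homotopic_id γ
  right_inv := by simpa using extendBy_symm_comp_extendBy_homotopic_id (g := g) γ.symm

lemma joined_homotopyEquivOfPath_symm_path (z : HomotopyFiber g b) :
    Joined (homotopyEquivOfPath g z.path.symm z) (ofPath (Path.refl (g z.1.1))) :=
  joined_ofPath_of_homotopic ⟨(Path.Homotopy.reflTransSymm z.path).symm⟩

end HomotopyFiber

section FundamentalGroups

variable {X Y : Type*} [TopologicalSpace X] [TopologicalSpace Y] {x : X}

/-- The class of a loop in the fundamental group. -/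
def loopClass (p : Path x x) : FundamentalGroup X x :=
  Path.Homotopic.Quotient.mk p

lemma loopClass_surjective : Function.Surjective (loopClass (x := x)) :=
  Path.Homotopic.Quotient.mk_surjective

lemma loopClass_eq_iff {p q : Path x x} : loopClass p = loopClass q ↔ p.Homotopic q :=
  Path.Homotopic.Quotient.eq

lemma loopClass_trans (p q : Path x x) : loopClass (p.trans q) = loopClass q * loopClass p :=
  rfl

lemma map_loopClass (g : C(X, Y)) (p : Path x x) :
    FundamentalGroup.map g x (loopClass p) = loopClass (p.map g.continuous) :=
  rfl

/-- The fundamental group as the set of path components of the loop space. -/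
def fundamentalGroupEquivPi0 (x : X) : FundamentalGroup X x ≃ ZerothHomotopy (Path x x) :=
  Quotient.congrRight fun _ _ ↦ path_homotopic_iff_joined

/-- The map of loop spaces induced by `g`. -/
def loopMap (g : C(X, Y)) (x : X) : C(Path x x, Path (g x) (g x)) where
  toFun p := p.map g.continuous
  continuous_toFun := Path.continuous_uncurry_iff.1 (by
    change Continuous fun q : Path x x × I ↦ g (q.1 q.2)
    fun_prop)

lemma card_eq_of_surjective_of_surjective {P S T : Type*} {u : P → S} {v : P → T}
    (hu : Function.Surjective u) (hv : Function.Surjective v)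
    (huv : ∀ p q, u p = u q ↔ v p = v q) : Nat.card S = Nat.card T :=
  Nat.card_congr <| (Setoid.quotientKerEquivOfSurjective u hu).symm.trans <|
    (Quotient.congrRight huv).trans (Setoid.quotientKerEquivOfSurjective v hv)

end FundamentalGroups

namespace HomotopyFiber

variable {A B : Type*} [TopologicalSpace A] [TopologicalSpace B]

/-- The path components of the homotopy fibre lying over the path component `c` of the domain. -/
abbrev ComponentsOver (g : C(A, B)) (b : B) (c : ZerothHomotopy A) : Type _ :=
  {w : ZerothHomotopy (HomotopyFiber g b) // pi0Map (incl g b).continuous w = c}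

lemma joined_ofPath_loop_iff (g : C(A, B)) {a : A} (q q' : Path (g a) (g a)) :
    Joined (ofPath q) (ofPath q') ↔
      (loopClass q)⁻¹ * loopClass q' ∈ (FundamentalGroup.map g a).range := by
  rw [joined_ofPath_iff, ← inv_mem_iff, mul_inv_rev, inv_inv, MonoidHom.mem_range,
    loopClass_surjective.exists]
  refine exists_congr fun δ ↦ ?_
  rw [← loopClass_eq_iff, loopClass_trans, map_loopClass, eq_inv_mul_iff_mul_eq, eq_comm]

lemma card_componentsOver (g : C(A, B)) (a : A) :
    Nat.card (ComponentsOver g (g a) (toPi0 a)) = (FundamentalGroup.map g a).range.index := by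
  let component (q : Path (g a) (g a)) : ComponentsOver g (g a) (toPi0 a) :=
    ⟨toPi0 (ofPath q), rfl⟩
  let coset (q : Path (g a) (g a)) : FundamentalGroup B (g a) ⧸ (FundamentalGroup.map g a).range :=
    QuotientGroup.mk (loopClass q)
  refine card_eq_of_surjective_of_surjective (u := component) (v := coset) ?_
    (QuotientGroup.mk_surjective.comp loopClass_surjective) fun q q' ↦ ?_
  · rintro ⟨w, hw⟩
    obtain ⟨z, rfl⟩ := toPi0_surjective w
    rw [pi0Map_toPi0, toPi0_eq_toPi0_iff] at hw
    let δ : Path a z.1.1 := hw.somePath.symm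
    exact ⟨(δ.map g.continuous).trans z.path,
      Subtype.ext (toPi0_eq_toPi0_iff.2 (joined_ofPath_map_trans δ z.path))⟩
  · rw [Subtype.ext_iff, toPi0_eq_toPi0_iff, joined_ofPath_loop_iff, QuotientGroup.eq]

/-- The point `(a, refl)` of the homotopy fibre over `g a`. -/
def basePoint (g : C(A, B)) (a : A) : HomotopyFiber g (g a) :=
  ofPath (Path.refl (g a))

/-- Loops in the homotopy fibre of `g` form the homotopy fibre of `loopMap g a`. -/
def loopHomeomorph (g : C(A, B)) (a : A) : Path (basePoint g a) (basePoint g a) ≃ₜ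
    HomotopyFiber (loopMap g a) (loopMap g a (Path.refl a)) where
  toFun p := ⟨(p.map (incl g (g a)).continuous,
    ⟨fun t ↦ ⟨⟨fun s ↦ (p s).1.2 t, by fun_prop⟩, by change (p 0).1.2 t = g a; rw [p.source]; rfl,
      by change (p 1).1.2 t = g a; rw [p.target]; rfl⟩,
      Path.continuous_uncurry_iff.1 (by
        change Continuous fun q : I × I ↦ (p q.2).1.2 q.1
        fun_prop)⟩), by
      ext s; exact (p s).2.1, by
      ext s; exact (p s).2.2⟩
  invFun w := ⟨⟨fun s ↦ ⟨(w.1.1 s, ⟨fun t ↦ w.1.2 t s, by fun_prop⟩),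
      by change w.1.2 0 s = _; rw [w.2.1]; rfl, by change w.1.2 1 s = _; rw [w.2.2]; rfl⟩,
        continuous_of_uncurry w.1.1.continuous (by
          change Continuous fun q : I × I ↦ w.1.2 q.2 q.1
          fun_prop)⟩,
      Subtype.ext (Prod.ext w.1.1.source (by ext t; exact (w.1.2 t).source)),
      Subtype.ext (Prod.ext w.1.1.target (by ext t; exact (w.1.2 t).target))⟩
  left_inv _ := rfl
  right_inv _ := rfl
  continuous_toFun := by
    refine continuous_of_uncurry (Path.continuous_uncurry_iff.1 ?_)
      (Path.continuous_uncurry_iff.1 ?_)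
    · change Continuous fun q : Path (basePoint g a) (basePoint g a) × I ↦ (q.1 q.2).1.1
      fun_prop
    · change Continuous fun q : (Path (basePoint g a) (basePoint g a) × I) × I ↦
        (q.1.1 q.2).1.2 q.1.2
      fun_prop
  continuous_invFun := by
    refine Path.continuous_uncurry_iff.1 (continuous_of_uncurry ?_ ?_)
    · change Continuous fun q : HomotopyFiber (loopMap g a) (loopMap g a (Path.refl a)) × I ↦
        q.1.1.1 q.2
      fun_prop
    · change Continuous fun q :
        (HomotopyFiber (loopMap g a) (loopMap g a (Path.refl a)) × I) × I ↦ q.1.1.1.2 q.2 q.1.2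
      fun_prop

/-- The homomorphism of fundamental groups induced by the projection of the homotopy fibre. -/
noncomputable def inclHom (g : C(A, B)) (a : A) :
    FundamentalGroup (HomotopyFiber g (g a)) (basePoint g a) →* FundamentalGroup A a :=
  FundamentalGroup.map (incl g (g a)) (basePoint g a)

lemma inclHom_loopClass (g : C(A, B)) {a : A} (p : Path (basePoint g a) (basePoint g a)) :
    inclHom g a (loopClass p) = loopClass (loopHomeomorph g a p).1.1 :=
  rfl

lemma range_inclHom (g : C(A, B)) (a : A) :
    (inclHom g a).range = (FundamentalGroup.map g a).ker := by
  ext d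
  obtain ⟨γ, rfl⟩ := loopClass_surjective d
  rw [MonoidHom.mem_ker]
  constructor
  · rintro ⟨e, he⟩
    obtain ⟨p, rfl⟩ := loopClass_surjective e
    have hnull : (loopMap g a (loopHomeomorph g a p).1.1).Homotopic (Path.refl (g a)) :=
      path_homotopic_iff_joined.2 ⟨(loopHomeomorph g a p).path⟩
    rw [← he, inclHom_loopClass, map_loopClass]
    exact loopClass_eq_iff.2 hnull
  · intro h
    obtain ⟨P⟩ := path_homotopic_iff_joined.1 (loopClass_eq_iff.1 h)
    exact ⟨loopClass ((loopHomeomorph g a).symm (ofPath (g := loopMap g a) P)), rfl⟩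

lemma card_ker_inclHom (g : C(A, B)) (a : A) :
    Nat.card (inclHom g a).ker =
      (FundamentalGroup.map (loopMap g a) (Path.refl a)).range.index := by
  rw [← card_componentsOver]
  let e : FundamentalGroup (HomotopyFiber g (g a)) (basePoint g a) ≃
      ZerothHomotopy (HomotopyFiber (loopMap g a) (loopMap g a (Path.refl a))) :=
    (fundamentalGroupEquivPi0 _).trans
      (Equiv.ofBijective _ (bijective_pi0Map_of_homotopyEquiv (loopHomeomorph g a).toHomotopyEquiv))
  refine Nat.card_congr (e.subtypeEquiv fun d ↦ ?_)
  obtain ⟨p, rfl⟩ := loopClass_surjective d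
  exact loopClass_eq_iff.trans (path_homotopic_iff_joined.trans toPi0_eq_toPi0_iff.symm)

lemma card_fundamentalGroup (g : C(A, B)) (a : A) :
    Nat.card (FundamentalGroup (HomotopyFiber g (g a)) (basePoint g a)) =
      Nat.card (FundamentalGroup.map g a).ker *
        (FundamentalGroup.map (loopMap g a) (Path.refl a)).range.index := by
  rw [← range_inclHom, ← card_ker_inclHom, mul_comm, ← Subgroup.index_ker,
    Subgroup.card_mul_index]

end HomotopyFiber

section Mu

variable {N : ℕ} {X Y : Type*} [TopologicalSpace X] [TopologicalSpace Y] {x x' : X}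

/-- The homotopy groups of `X` at `x` are finite, and trivial in degrees above `N`. Finiteness is
recorded by `Nat.card`, which is `0` on infinite types. -/
structure IsPiFiniteAt (N : ℕ) (X : Type*) [TopologicalSpace X] (x : X) : Prop where
  card_ne_zero : ∀ n, Nat.card (HomotopyGroup (Fin (n + 1)) X x) ≠ 0
  card_eq_one : ∀ n, N ≤ n → Nat.card (HomotopyGroup (Fin (n + 1)) X x) = 1

lemma IsPiFiniteAt.mono {M : ℕ} (hMN : M ≤ N) (h : IsPiFiniteAt M X x) : IsPiFiniteAt N X x :=
  ⟨h.card_ne_zero, fun n hn ↦ h.card_eq_one n (hMN.trans hn)⟩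

lemma IsLocallyFinite.exists_isPiFiniteAt (h : IsLocallyFinite X) (x : X) :
    ∃ N, IsPiFiniteAt N X x := by
  obtain ⟨hfinite, N, hN⟩ := h x
  refine ⟨N, fun n ↦ ?_, fun n hn ↦ ?_⟩
  · have := hfinite (n + 1) n.succ_pos
    exact Nat.card_pos.ne'
  · have := hN (n + 1) (Nat.lt_succ_of_le hn)
    exact Nat.card_unique

lemma IsPiFiniteAt.loop (h : IsPiFiniteAt (N + 1) X x) :
    IsPiFiniteAt N (Path x x) (Path.refl x) := by
  refine ⟨fun n ↦ ?_, fun n hn ↦ ?_⟩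
  · rw [← card_homotopyGroup_succ]
    exact h.card_ne_zero (n + 1)
  · rw [← card_homotopyGroup_succ]
    exact h.card_eq_one (n + 1) (Nat.succ_le_succ hn)

lemma IsPiFiniteAt.mu_eq_one (h : IsPiFiniteAt 0 X x) : mu X x = 1 :=
  finprod_eq_one_of_forall_eq_one fun n ↦ by rw [h.card_eq_one n n.zero_le, Nat.cast_one, one_zpow]

lemma IsPiFiniteAt.mu_eq_prod (h : IsPiFiniteAt N X x) : mu X x =
    ∏ n ∈ Finset.range N,
      (Nat.card (HomotopyGroup (Fin (n + 1)) X x) : ℚ) ^ ((-1 : ℤ) ^ (n + 1)) := by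
  refine finprod_eq_prod_of_mulSupport_subset _ fun n hn ↦ ?_
  rw [Finset.coe_range, Set.mem_Iio]
  by_contra! hNn
  refine hn ?_
  change (Nat.card (HomotopyGroup (Fin (n + 1)) X x) : ℚ) ^ _ = 1
  rw [h.card_eq_one n hNn, Nat.cast_one, one_zpow]

/-- Passing to loops shifts degrees by one and so inverts every factor. -/
lemma IsPiFiniteAt.mu_eq_inv (h : IsPiFiniteAt (N + 1) X x) :
    mu X x = (Nat.card (FundamentalGroup X x) * mu (Path x x) (Path.refl x))⁻¹ := by
  rw [h.mu_eq_prod, h.loop.mu_eq_prod, Finset.prod_range_succ', mul_comm, mul_inv,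
    ← Finset.prod_inv_distrib, card_homotopyGroup_one]
  congr 1
  · simp
  · refine Finset.prod_congr rfl fun n _ ↦ ?_
    rw [card_homotopyGroup_succ, pow_succ _ (n + 1), mul_neg_one, zpow_neg]

lemma mu_eq_of_joined (h : Joined x x') : mu X x = mu X x' :=
  finprod_congr fun _ ↦ by rw [card_homotopyGroup_eq_of_joined h]

lemma mu_eq_of_homotopyEquiv (e : X ≃ₕ Y) (x : X) : mu X x = mu Y (e.toFun x) :=
  finprod_congr fun _ ↦ by rw [card_homotopyGroup_eq_of_homotopyEquiv e x]

end Mu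

namespace HomotopyFiber

universe u v

lemma card_homotopyGroup_dvd {A : Type u} {B : Type v} [TopologicalSpace A] [TopologicalSpace B]
    (g : C(A, B)) (a : A) (n : ℕ) :
    Nat.card (HomotopyGroup (Fin (n + 1)) (HomotopyFiber g (g a)) (basePoint g a)) ∣
      Nat.card (HomotopyGroup (Fin (n + 1)) A a) *
        Nat.card (HomotopyGroup (Fin (n + 2)) B (g a)) := by
  induction n generalizing A B with
  | zero =>
    rw [card_homotopyGroup_succ 1, card_homotopyGroup_one, card_homotopyGroup_one,
      card_homotopyGroup_one, card_fundamentalGroup]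
    exact mul_dvd_mul (Subgroup.card_subgroup_dvd_card _) (Subgroup.index_dvd_card _)
  | succ n ih =>
    rw [card_homotopyGroup_succ, card_homotopyGroup_succ (n + 1) a,
      card_homotopyGroup_succ (n + 2) (g a),
      card_homotopyGroup_eq_of_homotopyEquiv (loopHomeomorph g a).toHomotopyEquiv]
    exact ih (loopMap g a) (Path.refl a)

lemma isPiFiniteAt_basePoint {A B : Type*} [TopologicalSpace A] [TopologicalSpace B] {N : ℕ}
    {g : C(A, B)} {a : A} (hA : IsPiFiniteAt N A a) (hB : IsPiFiniteAt N B (g a)) :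
    IsPiFiniteAt N (HomotopyFiber g (g a)) (basePoint g a) := by
  refine ⟨fun n h ↦ ?_, fun n hn ↦ ?_⟩
  · have hdvd := card_homotopyGroup_dvd g a n
    rw [h, zero_dvd_iff] at hdvd
    exact mul_ne_zero (hA.card_ne_zero n) (hB.card_ne_zero (n + 1)) hdvd
  · have hdvd := card_homotopyGroup_dvd g a n
    rwa [hA.card_eq_one n hn, hB.card_eq_one (n + 1) (Nat.le_succ_of_le hn), mul_one,
      Nat.dvd_one] at hdvd

lemma mu_path_basePoint {A B : Type*} [TopologicalSpace A] [TopologicalSpace B]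
    (g : C(A, B)) (a : A) : mu (Path (basePoint g a) (basePoint g a)) (Path.refl _) =
      mu (HomotopyFiber (loopMap g a) (loopMap g a (Path.refl a)))
        (basePoint (loopMap g a) (Path.refl a)) :=
  mu_eq_of_homotopyEquiv (loopHomeomorph g a).toHomotopyEquiv _

/-- With `k = |ker g_*|`, `i = |im g_*|`, `c` and `c'` the indices of the images of `π₁(g)` and
`π₂(g)`, one has `|π₁ A| = k i`, `|π₁ B| = i c` and `|π₁ F| = k c'`, and the induction hypothesis
applies to the loop spaces, for which `c'` plays the part of `c`. -/
lemma mu_basePoint_mul_index {A : Type u} {B : Type v} [TopologicalSpace A] [TopologicalSpace B]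
    {N : ℕ} {g : C(A, B)} {a : A} (hA : IsPiFiniteAt N A a) (hB : IsPiFiniteAt N B (g a)) :
    mu (HomotopyFiber g (g a)) (basePoint g a) * (FundamentalGroup.map g a).range.index =
      mu A a * (mu B (g a))⁻¹ := by
  induction N generalizing A B with
  | zero =>
    have hindex : (FundamentalGroup.map g a).range.index = 1 := by
      rw [← Nat.dvd_one, ← hB.card_eq_one 0 le_rfl, card_homotopyGroup_one]
      exact Subgroup.index_dvd_card _
    rw [hA.mu_eq_one, hB.mu_eq_one, (isPiFiniteAt_basePoint hA hB).mu_eq_one, hindex]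
    norm_num
  | succ N ih =>
    have hloop : mu (HomotopyFiber (loopMap g a) (loopMap g a (Path.refl a)))
        (basePoint (loopMap g a) (Path.refl a)) *
          (FundamentalGroup.map (loopMap g a) (Path.refl a)).range.index =
        mu (Path a a) (Path.refl a) * (mu (Path (g a) (g a)) (Path.refl (g a)))⁻¹ :=
      ih hA.loop hB.loop
    set G := FundamentalGroup.map g a
    have hcardA : Nat.card (FundamentalGroup A a) = Nat.card G.ker * Nat.card G.range := by
      rw [← Subgroup.index_ker, Subgroup.card_mul_index]
    have hcardB : Nat.card (FundamentalGroup B (g a)) = Nat.card G.range * G.range.index :=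
      (Subgroup.card_mul_index _).symm
    have hcardF : Nat.card (FundamentalGroup (HomotopyFiber g (g a)) (basePoint g a)) =
        Nat.card G.ker * (FundamentalGroup.map (loopMap g a) (Path.refl a)).range.index :=
      card_fundamentalGroup g a
    have hrange : (Nat.card G.range : ℚ) ≠ 0 := by
      have hne := hB.card_ne_zero 0
      rw [card_homotopyGroup_one, hcardB] at hne
      exact Nat.cast_ne_zero.2 (left_ne_zero_of_mul hne)
    rw [hA.mu_eq_inv, hB.mu_eq_inv, (isPiFiniteAt_basePoint hA hB).mu_eq_inv,
      hcardF, mu_path_basePoint, hcardA, hcardB]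
    push_cast
    rw [mul_assoc, mul_comm (Subgroup.index _ : ℚ) (mu _ _), hloop]
    field_simp

variable {X Y : Type*} [TopologicalSpace X] [TopologicalSpace Y]

lemma card_componentsOver_eq_of_path (g : C(X, Y)) {y y' : Y} (γ : Path y y')
    (c : ZerothHomotopy X) : Nat.card (ComponentsOver g y c) = Nat.card (ComponentsOver g y' c) :=
  Nat.card_congr <| (Equiv.ofBijective _
    (bijective_pi0Map_of_homotopyEquiv (homotopyEquivOfPath g γ))).subtypeEquiv <| by
      rintro ⟨w⟩
      rfl

lemma card_componentsOver_eq_index (g : C(X, Y)) {y : Y} (z : HomotopyFiber g y) :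
    Nat.card (ComponentsOver g y (toPi0 z.1.1)) = (FundamentalGroup.map g z.1.1).range.index := by
  rw [card_componentsOver_eq_of_path g z.path.symm, card_componentsOver]

lemma finite_componentsOver (hY : IsLocallyFinite Y) (g : C(X, Y)) (y : Y)
    (c : ZerothHomotopy X) : Finite (ComponentsOver g y c) := by
  cases isEmpty_or_nonempty (ComponentsOver g y c) with
  | inl _ => exact Finite.of_subsingleton
  | inr h =>
    obtain ⟨w, rfl⟩ := h
    obtain ⟨z, rfl⟩ := toPi0_surjective w
    obtain ⟨N, hN⟩ := hY.exists_isPiFiniteAt (g z.1.1)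
    refine Nat.finite_of_card_ne_zero (ne_of_eq_of_ne (card_componentsOver_eq_index g z) ?_)
    refine ne_zero_of_dvd_ne_zero ?_ (Subgroup.index_dvd_card _)
    exact card_homotopyGroup_one (g z.1.1) ▸ hN.card_ne_zero 0

lemma mu_eq_div_card_componentsOver (hX : IsLocallyFinite X) (hY : IsLocallyFinite Y)
    (g : C(X, Y)) {y : Y} (z : HomotopyFiber g y) : mu (HomotopyFiber g y) z =
      mu X z.1.1 * (mu Y y)⁻¹ / Nat.card (ComponentsOver g y (toPi0 z.1.1)) := by
  obtain ⟨M, hM⟩ := hX.exists_isPiFiniteAt z.1.1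
  obtain ⟨N, hN⟩ := hY.exists_isPiFiniteAt (g z.1.1)
  have hcard : (Nat.card (ComponentsOver g y (toPi0 z.1.1)) : ℚ) ≠ 0 := by
    have := finite_componentsOver hY g y (toPi0 z.1.1)
    have : Nonempty (ComponentsOver g y (toPi0 z.1.1)) := ⟨toPi0 z, rfl⟩
    exact Nat.cast_ne_zero.2 Nat.card_pos.ne'
  rw [eq_div_iff hcard, mu_eq_of_homotopyEquiv (homotopyEquivOfPath g z.path.symm),
    mu_eq_of_joined (joined_homotopyEquivOfPath_symm_path z), card_componentsOver_eq_index,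
    ← mu_eq_of_joined ⟨z.path⟩]
  exact mu_basePoint_mul_index (hM.mono (le_max_left M N)) (hN.mono (le_max_right M N))

lemma range_pi0Map_incl (g : C(X, Y)) (y : Y) : Set.range (pi0Map (incl g y).continuous) =
    {c : ZerothHomotopy X | pi0Map g.continuous c = toPi0 y} := by
  ext c
  constructor
  · rintro ⟨w, rfl⟩
    obtain ⟨z, rfl⟩ := toPi0_surjective w
    exact toPi0_eq_toPi0_iff.2 ⟨z.path⟩
  · intro hc
    obtain ⟨x, rfl⟩ := toPi0_surjective c
    have hjoined : Joined (g x) y := toPi0_eq_toPi0_iff.1 hc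
    exact ⟨toPi0 (ofPath hjoined.somePath), rfl⟩

end HomotopyFiber

section Fiberwise

variable {W C K : Type*} [Field K] {i : W → C} {s : C → K}

lemma finite_support_div_card_fiber (hs : s.support.Finite)
    (hi : ∀ w, Finite {w' // i w' = i w}) :
    (Function.support fun w ↦ s (i w) / Nat.card {w' // i w' = i w}).Finite := by
  have hpreimage : (i ⁻¹' s.support).Finite := hs.preimage' fun c _ ↦ by
    by_cases hc : ∃ w, i w = c
    · obtain ⟨w, rfl⟩ := hc
      exact hi w
    · exact Set.finite_empty.subset fun w hw ↦ hc ⟨w, hw⟩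
  exact hpreimage.subset fun w hw hsw ↦ hw (by simp [show s (i w) = 0 from hsw])

lemma finsum_div_card_fiber [CharZero K] (hs : s.support.Finite)
    (hi : ∀ w, Finite {w' // i w' = i w}) :
    ∑ᶠ w, s (i w) / Nat.card {w' // i w' = i w} = ∑ᶠ c ∈ Set.range i, s c := by
  classical
  have hW := finite_support_div_card_fiber hs hi
  have hcard (w : W) : (Nat.card {w' // i w' = i w} : K) ≠ 0 := by
    have : Nonempty {w' // i w' = i w} := ⟨w, rfl⟩
    exact Nat.cast_ne_zero.2 Nat.card_pos.ne'
  have hmem {w : W} : w ∈ hW.toFinset ↔ i w ∈ hs.toFinset := by simp [hcard]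
  have hfiber (c : C) (hc : c ∈ hs.toFinset) :
      ∑ w ∈ hW.toFinset with i w = c, s (i w) / Nat.card {w' // i w' = i w} =
        (Set.range i).indicator s c := by
    by_cases hrange : c ∈ Set.range i
    · obtain ⟨w, rfl⟩ := hrange
      have hfilter : Nat.card {w' // i w' = i w} = (hW.toFinset.filter (i · = i w)).card :=
        Nat.subtype_card _ fun w' ↦ by
          rw [Finset.mem_filter, hmem, and_iff_right_iff_imp]
          exact fun hw' ↦ hw' ▸ hc
      rw [Set.indicator_of_mem (Set.mem_range_self w),
        Finset.sum_eq_card_nsmul (b := s (i w) / Nat.card {w' // i w' = i w}) fun w' hw' ↦ by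
          rw [(Finset.mem_filter.1 hw').2], ← hfilter, nsmul_eq_mul, mul_div_cancel₀ _ (hcard w)]
    · rw [Set.indicator_of_notMem hrange, Finset.filter_false_of_mem fun w _ hw ↦ hrange ⟨w, hw⟩,
        Finset.sum_empty]
  calc ∑ᶠ w, s (i w) / Nat.card {w' // i w' = i w}
      = ∑ w ∈ hW.toFinset, s (i w) / Nat.card {w' // i w' = i w} := finsum_eq_sum _ hW
    _ = ∑ c ∈ hs.toFinset, ∑ w ∈ hW.toFinset with i w = c,
        s (i w) / Nat.card {w' // i w' = i w} :=
      (Finset.sum_fiberwise_of_maps_to (fun w hw ↦ hmem.1 hw) _).symm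
    _ = ∑ c ∈ hs.toFinset, (Set.range i).indicator s c := Finset.sum_congr rfl hfiber
    _ = ∑ᶠ c, (Set.range i).indicator s c :=
      (finsum_eq_sum_of_support_subset _ <| by
        rw [Set.Finite.coe_toFinset, Set.support_indicator]
        exact Set.inter_subset_right).symm
    _ = ∑ᶠ c ∈ Set.range i, s c := (finsum_mem_def _ _).symm

end Fiberwise

theorem statement0 {X Y : Type*} [TopologicalSpace X] [TopologicalSpace Y]
    (hX : IsLocallyFinite X) (hY : IsLocallyFinite Y)
    {f : X → Y} (hf : Continuous f)
    (α : ZerothHomotopy X → ℚ) (hα : (Function.support α).Finite) (y : Y)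
    -- an arbitrary choice of representative points for the components of the homotopy fiber
    (rep : ZerothHomotopy (HomotopyFiber f y) → HomotopyFiber f y)
    (hrep : ∀ z, toPi0 (rep z) = z)
    -- an arbitrary choice of representative points for the components of `X`
    (repX : ZerothHomotopy X → X) (hrepX : ∀ c, toPi0 (repX c) = c) :
    (Function.support fun z : ZerothHomotopy (HomotopyFiber f y) =>
        α (toPi0 (fiberIncl f y (rep z))) * mu (HomotopyFiber f y) (rep z)).Finite ∧
    ∑ᶠ z : ZerothHomotopy (HomotopyFiber f y),
        α (toPi0 (fiberIncl f y (rep z))) * mu (HomotopyFiber f y) (rep z) =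
      ∑ᶠ c ∈ {c : ZerothHomotopy X | pi0Map hf c = toPi0 y},
        α c * mu X (repX c) * (mu Y y)⁻¹ := by
  obtain ⟨g, rfl⟩ : ∃ g : C(X, Y), ⇑g = f := ⟨⟨f, hf⟩, rfl⟩
  let i : ZerothHomotopy (HomotopyFiber g y) → ZerothHomotopy X :=
    pi0Map (HomotopyFiber.incl g y).continuous
  let s (c : ZerothHomotopy X) : ℚ := α c * mu X (repX c) * (mu Y y)⁻¹
  have hs : s.support.Finite := hα.subset fun c hc hαc ↦ hc (by simp [s, hαc])
  have hi (w) : Finite {w' // i w' = i w} := HomotopyFiber.finite_componentsOver hY g y (i w)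
  have hterm (w : ZerothHomotopy (HomotopyFiber g y)) :
      α (toPi0 (fiberIncl g y (rep w))) * mu (HomotopyFiber g y) (rep w) =
        s (i w) / Nat.card {w' // i w' = i w} := by
    have hiw : toPi0 (rep w).1.1 = i w := congrArg i (hrep w)
    have hmu : mu X (rep w).1.1 = mu X (repX (i w)) :=
      mu_eq_of_joined (toPi0_eq_toPi0_iff.1 (hiw.trans (hrepX (i w)).symm))
    have hdiv := HomotopyFiber.mu_eq_div_card_componentsOver hX hY g (rep w)
    rw [hiw, hmu] at hdiv
    change α (toPi0 (rep w).1.1) * _ = _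
    rw [hiw, hdiv, ← mul_div_assoc, ← mul_assoc]
  simp only [hterm, ← HomotopyFiber.range_pi0Map_incl g y]
  exact ⟨finite_support_div_card_fiber hs hi, finsum_div_card_fiber hs hi⟩
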